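/- Let λ > 0 and β ∈ (0,1]. For every n ∈ ℕ₀ and every x ∈ ℝ, the generalized Appell polynomials generated by the fractional Poisson measure satisfy C_n^{λ,β}(x) = ∑_{k=0}^n binom(n,k) [∑_{i=0}^{n−k} (−1)^i i! B_{n−k,i}(M̃_{λ,β}(1), …, M̃_{λ,β}(n−k−i+1))] (x)_k, where B_{n,i} are the Bell polynomials, M̃_{λ,β}(m) := m! λ^m / Γ(mβ + 1), and (x)_k denotes the falling factorial (x)_0 = 1, (x)_k = x(x−1)⋯(x−k+1). -/

import Mathlib

open MeasureTheory Finset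
open scoped ENNReal NNReal

noncomputable section

/-- The complex Mittag-Leffler function `E_β(z) = ∑ zⁿ / Γ(βn+1)`. -/
def mittagLeffler (β : ℝ) (z : ℂ) : ℂ :=
  ∑' n : ℕ, z ^ n / (Complex.Gamma ((β * n + 1 : ℝ) : ℂ))

/-- The real Mittag-Leffler function `E_β(x) = ∑ xⁿ / Γ(βn+1)`. -/
def mittagLefflerR (β : ℝ) (x : ℝ) : ℝ :=
  ∑' n : ℕ, x ^ n / Real.Gamma (β * n + 1)

/-- The fractional Poisson measure `π_{λ,β} = ∑_k (λᵏ/k!) E_β⁽ᵏ⁾(-λ) δ_k` on `ℝ`. -/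
def fracPoisson (lam β : ℝ) : Measure ℝ :=
  Measure.sum fun k : ℕ =>
    ENNReal.ofReal (lam ^ k / k.factorial * iteratedDeriv k (mittagLefflerR β) (-lam)) •
      Measure.dirac (k : ℝ)

/-- The Poisson measure with rate `μ` on `ℝ`, `π_μ({k}) = (μᵏ/k!) e^{-μ}`. -/
def poissonMeasureR (μ : ℝ) : Measure ℝ :=
  Measure.sum fun k : ℕ =>
    ENNReal.ofReal (μ ^ k / k.factorial * Real.exp (-μ)) • Measure.dirac (k : ℝ)

/-- The generalized Appell polynomials
`C_n^{λ,β}(x) = dⁿ/dzⁿ [e^{x log(1+z)} / E_β(λz)]` at `z = 0`. -/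
def genAppell (lam β : ℝ) (n : ℕ) (x : ℂ) : ℂ :=
  iteratedDeriv n
    (fun z : ℂ => Complex.exp (x * Complex.log (1 + z)) / mittagLeffler β (lam * z)) 0

/-- The Appell polynomials `A_n^{λ,β}(x) = dⁿ/dzⁿ [e^{zx} / E_β(λ(eᶻ-1))]` at `z = 0`. -/
def appell (lam β : ℝ) (n : ℕ) (x : ℂ) : ℂ :=
  iteratedDeriv n
    (fun z : ℂ => Complex.exp (z * x) / mittagLeffler β (lam * (Complex.exp z - 1))) 0

/-- Stirling numbers of the first kind, via `(log(1+z))^k = k! ∑_{n≥k} s(n,k) zⁿ/n!`. -/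
def stirlingFst (n k : ℕ) : ℝ :=
  iteratedDeriv n (fun x : ℝ => (Real.log (1 + x)) ^ k) 0 / k.factorial

/-- Stirling numbers of the second kind, via `(eᶻ-1)^k = k! ∑_{n≥k} S(n,k) zⁿ/n!`. -/
def stirlingSnd (n k : ℕ) : ℝ :=
  iteratedDeriv n (fun x : ℝ => (Real.exp x - 1) ^ k) 0 / k.factorial

/-- The `n`-th moment of the fractional Poisson measure. -/
def fpMoment (lam β : ℝ) (n : ℕ) : ℝ := ∫ x, x ^ n ∂(fracPoisson lam β)

/-- `M̃_{λ,β}(m) = m! λᵐ / Γ(mβ+1)`. -/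
def tildeM (lam β : ℝ) (m : ℕ) : ℝ := m.factorial * lam ^ m / Real.Gamma (m * β + 1)

/-- The (partial exponential) Bell polynomials `B_{n,k}(x₁, …, x_{n-k+1})`. -/
def bellPoly (n k : ℕ) (x : ℕ → ℂ) : ℂ :=
  ∑ j ∈ (Fintype.piFinset fun _ : Fin (n - k + 1) => Finset.range (n + 1)).filter
      (fun j => (∑ i, j i) = k ∧ (∑ i, (i.1 + 1) * j i) = n),
    (n.factorial : ℂ) / (∏ i, ((j i).factorial : ℂ)) *
      ∏ i, (x (i.1 + 1) / ((i.1 + 1).factorial : ℂ)) ^ j i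

/-!
The Leibniz rule writes `C_n(x)` as the binomial convolution of the derivatives at `0` of
`(1 + z)ˣ`, which are the falling factorials `(x)_k`, with those of `1 / E_β(λz)`. Since `1 / Γ` is
bounded on `[1, ∞)`, the defining series of `E_β` converges on the unit disc, so the Taylor series
of `E_β(λz)` is `1 + u` with `u = ∑_{m ≥ 1} M̃(m) zᵐ / m!`. That of the reciprocal is then the
formal inverse of `1 + u`, the geometric series `∑ᵢ (-u)ⁱ`, and by the multinomial theorem
`uⁱ = i! ∑ₘ B_{m,i}(M̃) zᵐ / m!`.
-/

open scoped Nat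

section TaylorSeries

open PowerSeries

variable {𝕜 : Type*} [NontriviallyNormedField 𝕜]

/-- The Taylor series of `f` at `a`, as a formal power series. It is meaningful for `f` smooth at
`a` and `𝕜` of characteristic zero; it gives access to the algebra of `𝕜⟦X⟧`, in particular to
formal inverses. -/
def taylorSeries (f : 𝕜 → 𝕜) (a : 𝕜) : 𝕜⟦X⟧ :=
  PowerSeries.mk fun n => iteratedDeriv n f a / n !

variable {f g : 𝕜 → 𝕜} {a : 𝕜}

lemma constantCoeff_taylorSeries : constantCoeff (taylorSeries f a) = f a := by
  simp [taylorSeries, ← coeff_zero_eq_constantCoeff_apply]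

lemma taylorSeries_congr (h : f =ᶠ[nhds a] g) : taylorSeries f a = taylorSeries g a := by
  ext n
  simp only [taylorSeries, coeff_mk, h.iteratedDeriv_eq]

lemma taylorSeries_one : taylorSeries (fun _ => (1 : 𝕜)) a = 1 := by
  ext n
  cases n <;> simp [taylorSeries, iteratedDeriv_const, coeff_one]

variable [CharZero 𝕜]

lemma factorial_mul_coeff_taylorSeries (n : ℕ) :
    (n ! : 𝕜) * coeff n (taylorSeries f a) = iteratedDeriv n f a := by
  rw [taylorSeries, coeff_mk, mul_div_cancel₀ _ (Nat.cast_ne_zero.2 n.factorial_ne_zero)]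

lemma taylorSeries_mul (hf : ∀ n : ℕ, ContDiffAt 𝕜 n f a) (hg : ∀ n : ℕ, ContDiffAt 𝕜 n g a) :
    taylorSeries (fun z => f z * g z) a = taylorSeries f a * taylorSeries g a := by
  ext n
  rw [coeff_mul, Nat.sum_antidiagonal_eq_sum_range_succ_mk]
  simp only [taylorSeries, coeff_mk]
  rw [iteratedDeriv_fun_mul (hf n) (hg n), sum_div]
  refine sum_congr rfl fun k hk => ?_
  have hkn : k ≤ n := Nat.lt_succ_iff.1 (mem_range.1 hk)
  have hfact (m : ℕ) : (m ! : 𝕜) ≠ 0 := Nat.cast_ne_zero.2 m.factorial_ne_zero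
  rw [Nat.cast_choose 𝕜 hkn]
  field_simp [hfact]

lemma taylorSeries_inv [CompleteSpace 𝕜] (hf : AnalyticAt 𝕜 f a) (ha : f a ≠ 0) :
    taylorSeries (fun z => (f z)⁻¹) a = (taylorSeries f a)⁻¹ := by
  have hmul : (fun z => (f z)⁻¹ * f z) =ᶠ[nhds a] fun _ => 1 := by
    filter_upwards [hf.continuousAt.eventually_ne ha] with z hz using inv_mul_cancel₀ hz
  rw [PowerSeries.eq_inv_iff_mul_eq_one (by rwa [constantCoeff_taylorSeries]),
    ← taylorSeries_mul (fun _ => (hf.fun_inv ha).contDiffAt) (fun _ => hf.contDiffAt),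
    taylorSeries_congr hmul, taylorSeries_one]

variable [CompleteSpace 𝕜]

lemma taylorSeries_of_hasFPowerSeriesAt {p : FormalMultilinearSeries 𝕜 𝕜 𝕜}
    (h : HasFPowerSeriesAt f p a) : taylorSeries f a = PowerSeries.mk p.coeff := by
  ext n
  rw [h.eq_formalMultilinearSeries h.analyticAt.hasFPowerSeriesAt]
  simp [taylorSeries]

lemma taylorSeries_comp_const_mul {c : 𝕜} (hf : AnalyticAt 𝕜 f 0) :
    taylorSeries (fun z => f (c * z)) 0 = rescale c (taylorSeries f 0) := by
  obtain ⟨p, hp⟩ := hf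
  have hcomp : HasFPowerSeriesAt (fun z => f (c * z))
      (p.compContinuousLinearMap (ContinuousLinearMap.mul 𝕜 𝕜 c)) 0 :=
    HasFPowerSeriesAt.compContinuousLinearMap (u := ContinuousLinearMap.mul 𝕜 𝕜 c) (by simpa)
  rw [taylorSeries_of_hasFPowerSeriesAt hp, taylorSeries_of_hasFPowerSeriesAt hcomp]
  ext n
  rw [coeff_rescale, coeff_mk, coeff_mk, FormalMultilinearSeries.coeff,
    FormalMultilinearSeries.compContinuousLinearMap_apply,
    FormalMultilinearSeries.apply_eq_prod_smul_coeff]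
  simp

end TaylorSeries

section CoeffPow

open PowerSeries

lemma coeff_inv_one_add {K : Type*} [Field K] {u : K⟦X⟧} (hu : constantCoeff u = 0) (m : ℕ) :
    coeff m (1 + u)⁻¹ = ∑ i ∈ range (m + 1), (-1) ^ i * coeff m (u ^ i) := by
  have hinv : (1 + u) * (1 + u)⁻¹ = 1 := PowerSeries.mul_inv_cancel _ (by simp [hu])
  have hremainder : (1 + u)⁻¹ - ∑ i ∈ range (m + 1), (-u) ^ i = (-u) ^ (m + 1) * (1 + u)⁻¹ := by
    linear_combination
      (∑ i ∈ range (m + 1), (-u) ^ i) * hinv - (1 + u)⁻¹ * mul_neg_geom_sum (-u) (m + 1)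
  have hdvd : (X : K⟦X⟧) ^ (m + 1) ∣ (-u) ^ (m + 1) * (1 + u)⁻¹ :=
    (pow_dvd_pow_of_dvd ((dvd_neg).2 (X_dvd_iff.2 hu)) _).mul_right _
  have hcoeff := X_pow_dvd_iff.1 hdvd m m.lt_succ_self
  rw [← hremainder, map_sub, sub_eq_zero] at hcoeff
  rw [hcoeff, map_sum]
  refine sum_congr rfl fun i _ => ?_
  rw [neg_pow, ← coeff_C_mul]
  simp

lemma coeff_pow_congr {R : Type*} [CommRing R] {u v : R⟦X⟧} {m i : ℕ}
    (hu : constantCoeff u = 0) (hv : constantCoeff v = 0)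
    (huv : ∀ d ≤ m - i, coeff (d + 1) u = coeff (d + 1) v) :
    coeff m (u ^ i) = coeff m (v ^ i) := by
  -- Every factor has order at least one, so none of the `i` contributes beyond degree `m - i + 1`.
  obtain ⟨u, rfl⟩ := X_dvd_iff.2 hu
  obtain ⟨v, rfl⟩ := X_dvd_iff.2 hv
  simp only [coeff_succ_X_mul] at huv
  have hdvd : (X : R⟦X⟧) ^ (m - i + 1) ∣ u - v :=
    X_pow_dvd_iff.2 fun d hd => by rw [map_sub, huv d (Nat.lt_succ_iff.1 hd), sub_self]
  have hpow : coeff (m - i) (u ^ i) = coeff (m - i) (v ^ i) := by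
    rw [← sub_eq_zero, ← map_sub]
    exact X_pow_dvd_iff.1 (hdvd.trans (sub_dvd_pow_sub_pow u v i)) _ (Nat.lt_succ_self _)
  rw [mul_pow, mul_pow, coeff_X_pow_mul', coeff_X_pow_mul', hpow]

lemma coeff_sum_monomial_pow {R ι : Type*} [CommSemiring R] [DecidableEq ι] (s : Finset ι)
    (e : ι → ℕ) (c : ι → R) (i m : ℕ) :
    coeff m ((∑ j ∈ s, monomial (e j) (c j)) ^ i) =
      ∑ k ∈ (s.piAntidiag i).filter (fun k => ∑ j ∈ s, e j * k j = m),
        (Nat.multinomial s k : R) * ∏ j ∈ s, c j ^ k j := by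
  rw [sum_pow_eq_sum_piAntidiag, map_sum, sum_filter]
  refine sum_congr rfl fun k _ => ?_
  simp only [monomial_pow, prod_monomial, ← nsmul_eq_mul, map_nsmul, coeff_monomial, smul_ite,
    smul_zero, eq_comm (a := m), mul_comm (e _)]

end CoeffPow

section Bell

open PowerSeries

/-- The exponential generating function `∑_{j ≥ 1} x_j Xʲ / j!` of a sequence indexed from `1`,
whose powers generate the Bell polynomials in the `x_j`; the value `x 0` is ignored. -/
def bellSeries (x : ℕ → ℂ) : ℂ⟦X⟧ :=
  X * PowerSeries.mk fun j => x (j + 1) / (j + 1)!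

lemma constantCoeff_bellSeries (x : ℕ → ℂ) : constantCoeff (bellSeries x) = 0 := by
  simp [bellSeries]

lemma coeff_succ_bellSeries (x : ℕ → ℂ) (d : ℕ) :
    coeff (d + 1) (bellSeries x) = x (d + 1) / (d + 1)! := by
  rw [bellSeries, coeff_succ_X_mul, coeff_mk]

lemma coeff_bellSeries_pow (x : ℕ → ℂ) (m i : ℕ) :
    coeff m (bellSeries x ^ i) =
      coeff m ((∑ j : Fin (m - i + 1), monomial (j + 1 : ℕ) (x (j + 1) / (j + 1)!)) ^ i) := by
  refine coeff_pow_congr (constantCoeff_bellSeries x) ?_ fun d hd => ?_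
  · simp [← coeff_zero_eq_constantCoeff_apply, coeff_monomial]
  · rw [coeff_succ_bellSeries, map_sum, sum_eq_single ⟨d, Nat.lt_succ_iff.2 hd⟩]
    · simp
    · intro j _ hj
      rw [coeff_monomial, if_neg]
      simpa [Fin.ext_iff, eq_comm] using hj
    · simp

lemma filter_piFinset_eq_filter_piAntidiag (m i : ℕ) :
    (Fintype.piFinset fun _ : Fin (m - i + 1) => range (m + 1)).filter
        (fun k => ∑ j, k j = i ∧ ∑ j, (j.1 + 1) * k j = m) =
      (piAntidiag univ i).filter fun k => ∑ j, (j.1 + 1) * k j = m := by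
  ext k
  simp only [mem_filter, mem_piAntidiag, Fintype.mem_piFinset, mem_range, mem_univ, implies_true,
    and_true]
  refine ⟨fun ⟨_, h⟩ => h, fun h => ⟨fun j => Nat.lt_succ_iff.2 ?_, h⟩⟩
  calc k j ≤ (j.1 + 1) * k j := Nat.le_mul_of_pos_left _ j.1.succ_pos
    _ ≤ ∑ j, (j.1 + 1) * k j :=
      single_le_sum (f := fun j => (j.1 + 1) * k j) (fun _ _ => Nat.zero_le _) (mem_univ j)
    _ = m := h.2

lemma factorial_mul_coeff_bellSeries_pow (x : ℕ → ℂ) (m i : ℕ) :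
    (m ! : ℂ) * coeff m (bellSeries x ^ i) = (i ! : ℂ) * bellPoly m i x := by
  rw [coeff_bellSeries_pow, coeff_sum_monomial_pow, bellPoly,
    filter_piFinset_eq_filter_piAntidiag, mul_sum, mul_sum]
  refine sum_congr rfl fun k hk => ?_
  have hsum : ∑ j, k j = i := (mem_piAntidiag.1 (mem_filter.1 hk).1).1
  have hmultinomial : (∏ j, ((k j)! : ℂ)) * Nat.multinomial univ k = i ! := by
    exact_mod_cast hsum ▸ Nat.multinomial_spec univ k
  have hne : ∏ j, ((k j)! : ℂ) ≠ 0 :=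
    prod_ne_zero_iff.2 fun j _ => Nat.cast_ne_zero.2 (k j).factorial_ne_zero
  rw [← hmultinomial]
  field_simp

lemma factorial_mul_coeff_inv_one_add_bellSeries (x : ℕ → ℂ) (m : ℕ) :
    (m ! : ℂ) * coeff m (1 + bellSeries x)⁻¹ =
      ∑ i ∈ range (m + 1), (-1) ^ i * (i ! : ℂ) * bellPoly m i x := by
  rw [coeff_inv_one_add (constantCoeff_bellSeries x), mul_sum]
  refine sum_congr rfl fun i _ => ?_
  rw [mul_left_comm, factorial_mul_coeff_bellSeries_pow, mul_assoc]

end Bell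

section BinomialSeries

lemma hasFPowerSeriesAt_exp_mul_log_one_add (x : ℂ) :
    HasFPowerSeriesAt (fun z : ℂ => Complex.exp (x * Complex.log (1 + z)))
      (binomialSeries ℂ x) 0 := by
  refine Complex.one_add_cpow_hasFPowerSeriesAt_zero.congr ?_
  have hne : ∀ᶠ z : ℂ in nhds 0, 1 + z ≠ 0 :=
    ContinuousAt.eventually_ne (by fun_prop) (by simp)
  filter_upwards [hne] with z hz
  rw [Complex.cpow_def_of_ne_zero hz, mul_comm]

lemma iteratedDeriv_exp_mul_log_one_add (x : ℂ) (k : ℕ) :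
    iteratedDeriv k (fun z : ℂ => Complex.exp (x * Complex.log (1 + z))) 0 =
      (descPochhammer ℂ k).eval x := by
  rw [← factorial_mul_coeff_taylorSeries,
    taylorSeries_of_hasFPowerSeriesAt (hasFPowerSeriesAt_exp_mul_log_one_add x),
    PowerSeries.coeff_mk, binomialSeries, FormalMultilinearSeries.coeff_ofScalars, ← nsmul_eq_mul,
    ← Ring.descPochhammer_eq_factorial_smul_choose, ← Polynomial.aeval_eq_smeval,
    ← descPochhammer_map (algebraMap ℤ ℂ), Polynomial.eval_map_algebraMap]

end BinomialSeries

section MittagLeffler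

open PowerSeries

variable {β : ℝ}

lemma one_le_radius_mittagLeffler (hβ : 0 ≤ β) :
    1 ≤ (FormalMultilinearSeries.ofScalars ℂ
      fun n : ℕ => (Complex.Gamma ((β * n + 1 : ℝ) : ℂ))⁻¹).radius := by
  obtain ⟨x₀, hx₀, hmin⟩ := Real.exists_isMinOn_Gamma_Ioi
  have hGamma_pos : 0 < Real.Gamma x₀ := Real.Gamma_pos_of_pos (zero_lt_one.trans hx₀.1)
  refine FormalMultilinearSeries.le_radius_of_bound (r := 1) _ (Real.Gamma x₀)⁻¹ fun n => ?_
  have harg : 0 < β * n + 1 := by positivity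
  rw [FormalMultilinearSeries.ofScalars_norm, Complex.Gamma_ofReal, norm_inv, Complex.norm_real,
    Real.norm_of_nonneg (Real.Gamma_pos_of_pos harg).le, NNReal.coe_one, one_pow, mul_one]
  exact inv_anti₀ hGamma_pos (hmin harg)

lemma hasFPowerSeriesAt_mittagLeffler (hβ : 0 ≤ β) :
    HasFPowerSeriesAt (mittagLeffler β) (FormalMultilinearSeries.ofScalars ℂ
      fun n : ℕ => (Complex.Gamma ((β * n + 1 : ℝ) : ℂ))⁻¹) 0 := by
  have hsum : mittagLeffler β = FormalMultilinearSeries.ofScalarsSum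
      fun n : ℕ => (Complex.Gamma ((β * n + 1 : ℝ) : ℂ))⁻¹ := by
    funext z
    simp only [mittagLeffler, FormalMultilinearSeries.ofScalarsSum_eq_tsum, smul_eq_mul,
      div_eq_inv_mul]
  rw [hsum]
  exact (FormalMultilinearSeries.hasFPowerSeriesOnBall _
    (zero_lt_one.trans_le (one_le_radius_mittagLeffler hβ))).hasFPowerSeriesAt

lemma mittagLeffler_zero : mittagLeffler β 0 = 1 := by
  rw [mittagLeffler, tsum_eq_single 0 fun n hn => by simp [hn]]
  simp

lemma analyticAt_mittagLeffler_const_mul (hβ : 0 ≤ β) (c : ℂ) :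
    AnalyticAt ℂ (fun z => mittagLeffler β (c * z)) 0 :=
  AnalyticAt.fun_comp (by simpa using (hasFPowerSeriesAt_mittagLeffler hβ).analyticAt) (by fun_prop)

lemma taylorSeries_mittagLeffler_const_mul (hβ : 0 ≤ β) (lam : ℝ) :
    taylorSeries (fun z : ℂ => mittagLeffler β (lam * z)) 0 =
      1 + bellSeries fun m => (tildeM lam β m : ℂ) := by
  have h := hasFPowerSeriesAt_mittagLeffler hβ
  rw [taylorSeries_comp_const_mul h.analyticAt, taylorSeries_of_hasFPowerSeriesAt h]
  ext m
  rw [coeff_rescale, coeff_mk, FormalMultilinearSeries.coeff_ofScalars, Complex.Gamma_ofReal,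
    map_add]
  cases m with
  | zero => simp [constantCoeff_bellSeries]
  | succ d =>
    have hfact : ((d + 1)! : ℂ) ≠ 0 := Nat.cast_ne_zero.2 (d + 1).factorial_ne_zero
    rw [coeff_one, if_neg d.succ_ne_zero, zero_add, coeff_succ_bellSeries, tildeM, mul_comm β]
    push_cast
    field_simp

lemma iteratedDeriv_inv_mittagLeffler_const_mul (hβ : 0 ≤ β) (lam : ℝ) (m : ℕ) :
    iteratedDeriv m (fun z : ℂ => (mittagLeffler β (lam * z))⁻¹) 0 =
      ∑ i ∈ range (m + 1), (-1) ^ i * (i ! : ℂ) * bellPoly m i fun j => (tildeM lam β j : ℂ) := by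
  rw [← factorial_mul_coeff_taylorSeries,
    taylorSeries_inv (analyticAt_mittagLeffler_const_mul hβ lam) (by simp [mittagLeffler_zero]),
    taylorSeries_mittagLeffler_const_mul hβ, factorial_mul_coeff_inv_one_add_bellSeries]

end MittagLeffler

theorem stmt19_general (lam β : ℝ) (hβ : 0 ≤ β) (n : ℕ) (x : ℂ) :
    genAppell lam β n x =
      ∑ k ∈ Finset.range (n + 1), (n.choose k : ℂ) *
        (∑ i ∈ Finset.range (n - k + 1), (-1 : ℂ) ^ i * (i.factorial : ℂ) *
          bellPoly (n - k) i (fun j => ((tildeM lam β j : ℝ) : ℂ))) *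
        (descPochhammer ℂ k).eval x := by
  have hnum : AnalyticAt ℂ (fun z : ℂ => Complex.exp (x * Complex.log (1 + z))) 0 :=
    (hasFPowerSeriesAt_exp_mul_log_one_add x).analyticAt
  have hden : AnalyticAt ℂ (fun z : ℂ => (mittagLeffler β (lam * z))⁻¹) 0 :=
    (analyticAt_mittagLeffler_const_mul hβ lam).fun_inv (by simp [mittagLeffler_zero])
  simp only [genAppell, div_eq_mul_inv]
  rw [iteratedDeriv_fun_mul hnum.contDiffAt hden.contDiffAt]
  refine sum_congr rfl fun k _ => ?_
  rw [iteratedDeriv_exp_mul_log_one_add, iteratedDeriv_inv_mittagLeffler_const_mul hβ,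
    mul_right_comm]

theorem stmt19 (lam β : ℝ) (hlam : 0 < lam) (hβ0 : 0 < β) (hβ1 : β ≤ 1) (n : ℕ) (x : ℝ) :
    genAppell lam β n x =
      ∑ k ∈ Finset.range (n + 1), (n.choose k : ℂ) *
        (∑ i ∈ Finset.range (n - k + 1), (-1 : ℂ) ^ i * (i.factorial : ℂ) *
          bellPoly (n - k) i (fun j => ((tildeM lam β j : ℝ) : ℂ))) *
        (descPochhammer ℂ k).eval (x : ℂ) :=
  stmt19_general lam β hβ0.le n x
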